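/- arXiv:2502.17205 — 2 statements merged into one kernel-verified Lean document; each statement's English description precedes it below -/
import Mathlib

section
/- For every U = (f, b, g, q) in the state space 𝒰 the four eigenvalues of the flux Jacobian are strictly ordered: fb/2 < 3fb/2 < fb + gq/2 < fb + 3gq/2. Consequently the flux Jacobian DF(U) has four distinct real eigenvalues at every point of 𝒰 (strict hyperbolicity of the reduced system). -/
/-- Flux Jacobian of the reduced two-phase thin-film system. -/
noncomputable def fluxJacobian (f b g q : ℝ) : Matrix (Fin 4) (Fin 4) ℝ :=
  !![f*b,   f^2/2, 0,       0;
     b^2/2, f*b,   0,       0;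
     g*b,   f*g,   f*b+g*q, g^2/2;
     b*q,   f*q,   q^2/2,   f*b+g*q]

/-- The eigenvalues of the flux Jacobian. -/
noncomputable def eigval (f b g q : ℝ) : Fin 4 → ℝ :=
  ![f*b/2, 3*(f*b)/2, f*b + g*q/2, f*b + 3*(g*q)/2]

/-!
The first two components of the flux do not involve `(g, q)`, so the flux Jacobian is block lower
triangular. Each diagonal block has a constant diagonal `a` and off-diagonal product `d ^ 2`, hence
eigenvalues `a - d` and `a + d`: here `a = f * b`, `d = f * b / 2` for the first block and
`a = f * b + g * q`, `d = g * q / 2` for the second. The condition `f * b < g * q` is what separates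
the larger eigenvalue of the first block from the smaller one of the second.
-/

open Polynomial

theorem charpoly_of_const_diag_of_mul_eq_sq {R : Type*} [CommRing R] {a d x y : R}
    (hxy : x * y = d ^ 2) :
    (!![a, x; y, a]).charpoly = (X - C (a - d)) * (X - C (a + d)) := by
  have hC : (C x * C y : R[X]) = C d ^ 2 := by rw [← C_mul, hxy, C_pow]
  calc (!![a, x; y, a]).charpoly
      = (X - C a) * (X - C a) - C x * C y := by
        simp [Matrix.charpoly, Matrix.charmatrix, Matrix.det_fin_two]
    _ = (X - C (a - d)) * (X - C (a + d)) := by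
        rw [hC, C_sub, C_add]
        ring

section FluxJacobian

variable (f b g q : ℝ)

theorem fluxJacobian_eq_reindex_fromBlocks :
    fluxJacobian f b g q = Matrix.reindex finSumFinEquiv finSumFinEquiv
      (Matrix.fromBlocks !![f * b, f ^ 2 / 2; b ^ 2 / 2, f * b] 0
        !![g * b, f * g; b * q, f * q]
        !![f * b + g * q, g ^ 2 / 2; q ^ 2 / 2, f * b + g * q]) := by
  ext i j
  fin_cases i <;> fin_cases j <;> rfl

theorem charpoly_fluxJacobian :
    (fluxJacobian f b g q).charpoly = ∏ k, (X - C (eigval f b g q k)) := by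
  have hfb : f ^ 2 / 2 * (b ^ 2 / 2) = (f * b / 2) ^ 2 := by ring
  have hgq : g ^ 2 / 2 * (q ^ 2 / 2) = (g * q / 2) ^ 2 := by ring
  have h₀ : f * b - f * b / 2 = f * b / 2 := by ring
  have h₁ : f * b + f * b / 2 = 3 * (f * b) / 2 := by ring
  have h₂ : f * b + g * q - g * q / 2 = f * b + g * q / 2 := by ring
  have h₃ : f * b + g * q + g * q / 2 = f * b + 3 * (g * q) / 2 := by ring
  rw [fluxJacobian_eq_reindex_fromBlocks, Matrix.charpoly_reindex,
    Matrix.charpoly_fromBlocks_zero₁₂, charpoly_of_const_diag_of_mul_eq_sq hfb,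
    charpoly_of_const_diag_of_mul_eq_sq hgq, h₀, h₁, h₂, h₃, Fin.prod_univ_four, ← mul_assoc]
  rfl

theorem eval_eigval_charpoly_fluxJacobian (k : Fin 4) :
    eval (eigval f b g q k) (fluxJacobian f b g q).charpoly = 0 := by
  rw [charpoly_fluxJacobian, eval_prod]
  exact Finset.prod_eq_zero (Finset.mem_univ k) (by simp)

variable {f b g q}

theorem strictMono_eigval (hfb : 0 < f * b) (hU : f * b < g * q) :
    StrictMono (eigval f b g q) := by
  have h₀₁ : f * b / 2 < 3 * (f * b) / 2 := by linarith
  have h₁₂ : 3 * (f * b) / 2 < f * b + g * q / 2 := by linarith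
  have h₂₃ : f * b + g * q / 2 < f * b + 3 * (g * q) / 2 := by linarith
  refine Fin.strictMono_iff_lt_succ.mpr fun i ↦ ?_
  fin_cases i
  exacts [h₀₁, h₁₂, h₂₃]

end FluxJacobian

theorem strict_hyperbolicity_general (f b g q : ℝ) (hfb : 0 < f * b) (hU : f * b < g * q) :
    (f * b / 2 < 3 * (f * b) / 2 ∧ 3 * (f * b) / 2 < f * b + g * q / 2 ∧
      f * b + g * q / 2 < f * b + 3 * (g * q) / 2) ∧
    Function.Injective (eigval f b g q) ∧
    ∀ k : Fin 4, eval (eigval f b g q k) (fluxJacobian f b g q).charpoly = 0 := by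
  have hmono : StrictMono (eigval f b g q) := strictMono_eigval hfb hU
  have h₀₁ : eigval f b g q 0 < eigval f b g q 1 := hmono (by decide)
  have h₁₂ : eigval f b g q 1 < eigval f b g q 2 := hmono (by decide)
  have h₂₃ : eigval f b g q 2 < eigval f b g q 3 := hmono (by decide)
  exact ⟨⟨h₀₁, h₁₂, h₂₃⟩, hmono.injective, eval_eigval_charpoly_fluxJacobian f b g q⟩

/-- Strict hyperbolicity: at every state of `𝒰` the four eigenvalues are real,
strictly ordered (hence pairwise distinct), and each one is a root of the
characteristic polynomial of the flux Jacobian. -/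
theorem strict_hyperbolicity (f b g q : ℝ)
    (hf : 0 < f) (hb : 0 < b) (hg : 0 < g) (hq : 0 < q) (hU : f*b < g*q) :
    (f*b/2 < 3*(f*b)/2 ∧ 3*(f*b)/2 < f*b + g*q/2 ∧
      f*b + g*q/2 < f*b + 3*(g*q)/2) ∧
    Function.Injective (eigval f b g q) ∧
    ∀ k : Fin 4,
      Polynomial.eval (eigval f b g q k) (fluxJacobian f b g q).charpoly = 0 :=
  strict_hyperbolicity_general f b g q (mul_pos hf hb) hU
end

section
/- (Lax entropy inequalities for 2-shocks) Let f_l, b_l, f, b be positive real numbers with b·f_l = b_l·f and f·b < f_l·b_l, and set σ₂ = b_l·(f_l² + f_l·f + f²)/(2f_l). Then (3/2)·f·b < σ₂ < (3/2)·f_l·b_l and f_l·b_l/2 < σ₂; that is, the 2-shock speed σ₂ lies strictly between the second characteristic speeds λ₂ = 3fb/2 of the right and left states and exceeds the first characteristic speed λ₁ = f_l b_l/2 of the left state. -/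
/-!
On the ray `b = k * f` the second characteristic speed is `(3 / 2) * k * f ^ 2`, and the 2-shock
speed is `(k / 2) * (fl ^ 2 + fl * f + f ^ 2)`. Since `f * b < fl * bl` forces `f < fl`, replacing
every factor in `fl ^ 2 + fl * f + f ^ 2` by `f`, respectively by `fl`, gives the two bounds by the
second characteristic speeds; dropping its last two terms gives the bound by the first.
-/

section SumOfThreeProducts

variable {R : Type*} [CommSemiring R] [PartialOrder R] [IsStrictOrderedRing R] {x y : R}

theorem three_mul_sq_lt_sq_add_mul_add_sq (hx : 0 ≤ x) (hxy : x < y) :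
    3 * x ^ 2 < y ^ 2 + y * x + x ^ 2 :=
  calc
    3 * x ^ 2 = x ^ 2 + x * x + x ^ 2 := by ring
    _ < y ^ 2 + y * x + x ^ 2 := by
      gcongr ?_ + x ^ 2
      exact add_lt_add_of_lt_of_le (by gcongr) (by gcongr)

theorem sq_add_mul_add_sq_lt_three_mul_sq (hx : 0 ≤ x) (hxy : x < y) :
    y ^ 2 + y * x + x ^ 2 < 3 * y ^ 2 := by
  have hy : 0 < y := hx.trans_lt hxy
  calc
    y ^ 2 + y * x + x ^ 2 < y ^ 2 + y * y + y ^ 2 := by gcongr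
    _ = 3 * y ^ 2 := by ring

end SumOfThreeProducts

section TwoShock

variable {K : Type*} [Field K]

/-- The characteristic speed `λ₁` of the reduced two-phase thin-film system at a state with
first components `f` and `b`; it does not depend on the components `g` and `q`. -/
def firstCharSpeed (f b : K) : K := f * b / 2

/-- The characteristic speed `λ₂` of the reduced two-phase thin-film system at a state with
first components `f` and `b`; it does not depend on the components `g` and `q`. -/
def secondCharSpeed (f b : K) : K := (3 / 2) * (f * b)

/-- The speed `σ₂` of the 2-shock from a left state with first components `fl` and `bl` to the
state on its 2-shock curve with first component `f`. The other component `b` of that state is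
determined by `b / f = bl / fl`, so it is not an argument. -/
def twoShockSpeed (fl bl f : K) : K := bl * (fl ^ 2 + fl * f + f ^ 2) / (2 * fl)

variable {fl bl f b k : K}

theorem twoShockSpeed_mul_self (hfl : fl ≠ 0) :
    twoShockSpeed fl (k * fl) f = k / 2 * (fl ^ 2 + fl * f + f ^ 2) := by
  rw [twoShockSpeed, mul_right_comm, mul_div_mul_right _ _ hfl, mul_div_right_comm]

theorem secondCharSpeed_mul_self :
    secondCharSpeed f (k * f) = k / 2 * (3 * f ^ 2) := by
  rw [secondCharSpeed]
  ring

variable [LinearOrder K] [IsStrictOrderedRing K]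

theorem lt_of_mul_mul_self_lt (hk : 0 ≤ k) (hfl : 0 ≤ fl) (h : f * (k * f) < fl * (k * fl)) :
    f < fl := by
  rw [mul_left_comm, mul_left_comm fl, ← sq, ← sq] at h
  exact lt_of_pow_lt_pow_left₀ 2 hfl (lt_of_mul_lt_mul_left h hk)

theorem secondCharSpeed_right_lt_twoShockSpeed (hk : 0 < k) (hf : 0 ≤ f) (hlt : f < fl) :
    secondCharSpeed f (k * f) < twoShockSpeed fl (k * fl) f := by
  rw [secondCharSpeed_mul_self, twoShockSpeed_mul_self (hf.trans_lt hlt).ne']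
  exact mul_lt_mul_of_pos_left (three_mul_sq_lt_sq_add_mul_add_sq hf hlt) (half_pos hk)

theorem twoShockSpeed_lt_secondCharSpeed_left (hk : 0 < k) (hf : 0 ≤ f) (hlt : f < fl) :
    twoShockSpeed fl (k * fl) f < secondCharSpeed fl (k * fl) := by
  rw [secondCharSpeed_mul_self, twoShockSpeed_mul_self (hf.trans_lt hlt).ne']
  exact mul_lt_mul_of_pos_left (sq_add_mul_add_sq_lt_three_mul_sq hf hlt) (half_pos hk)

theorem firstCharSpeed_left_lt_twoShockSpeed (hk : 0 < k) (hfl : 0 < fl) (hf : 0 < f) :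
    firstCharSpeed fl (k * fl) < twoShockSpeed fl (k * fl) f :=
  calc
    firstCharSpeed fl (k * fl) = k / 2 * fl ^ 2 := by rw [firstCharSpeed]; ring
    _ < k / 2 * (fl ^ 2 + (fl * f + f ^ 2)) := by
      gcongr
      exact lt_add_of_pos_right _ (by positivity)
    _ = twoShockSpeed fl (k * fl) f := by rw [twoShockSpeed_mul_self hfl.ne', add_assoc]

theorem exists_pos_slope_of_mul_eq_mul (hfl : 0 < fl) (hbl : 0 < bl) (hbf : b * fl = bl * f) :
    ∃ k, 0 < k ∧ bl = k * fl ∧ b = k * f := by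
  refine ⟨bl / fl, div_pos hbl hfl, (div_mul_cancel₀ bl hfl.ne').symm, ?_⟩
  rw [div_mul_eq_mul_div, eq_div_iff hfl.ne', hbf]

theorem lax_inequalities_two_shock_general (hfl : 0 < fl) (hbl : 0 < bl) (hf : 0 < f)
    (hbf : b * fl = bl * f) (hlt : f * b < fl * bl) :
    secondCharSpeed f b < twoShockSpeed fl bl f ∧
    twoShockSpeed fl bl f < secondCharSpeed fl bl ∧
    firstCharSpeed fl bl < twoShockSpeed fl bl f := by
  obtain ⟨k, hk, rfl, rfl⟩ := exists_pos_slope_of_mul_eq_mul hfl hbl hbf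
  have hffl : f < fl := lt_of_mul_mul_self_lt hk.le hfl.le hlt
  exact ⟨secondCharSpeed_right_lt_twoShockSpeed hk hf.le hffl,
    twoShockSpeed_lt_secondCharSpeed_left hk hf.le hffl,
    firstCharSpeed_left_lt_twoShockSpeed hk hfl hf⟩

end TwoShock

/-- Lax entropy inequalities for 2-shocks: if `b/f = b_l/f_l` and
`fb < f_l b_l`, the 2-shock speed `σ₂ = b_l(f_l² + f_l f + f²)/(2f_l)`
satisfies `λ₂(U) = 3fb/2 < σ₂ < 3 f_l b_l/2 = λ₂(U_l)` and
`λ₁(U_l) = f_l b_l/2 < σ₂`. -/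
theorem lax_inequalities_two_shock (fl bl f b : ℝ)
    (hfl : 0 < fl) (hbl : 0 < bl) (hf : 0 < f) (hb : 0 < b)
    (hbf : b * fl = bl * f) (hlt : f * b < fl * bl) :
    (3/2) * (f*b) < bl * (fl^2 + fl*f + f^2) / (2*fl) ∧
    bl * (fl^2 + fl*f + f^2) / (2*fl) < (3/2) * (fl*bl) ∧
    fl * bl / 2 < bl * (fl^2 + fl*f + f^2) / (2*fl) :=
  lax_inequalities_two_shock_general hfl hbl hf hbf hlt
end
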